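/- For every integer L ≥ 0, ∑_{m₁,m₂≥0, m₁+m₂ even} q^{(m₁²+m₂²)/4} [L+(m₁−m₂)/2 choose m₁]_q [(m₁+m₂)/2 choose m₂]_q = ∑_{j∈ℤ} (−1)^j ( q^{j(20j+1)/2} [2L choose L−4j]_q + q^{(4j+1)(5j+1)/2} [2L choose L−4j−1]_q ). -/

import Mathlib

open Finset

/-- The variable `q`, realized as the generator of the field of rational functions over `ℚ`. -/
noncomputable def qq : RatFunc ℚ := RatFunc.X

/-- `(x)_n = ∏_{j=1}^n (1 - x^j)`. -/
noncomputable def qPoch (x : RatFunc ℚ) (n : ℕ) : RatFunc ℚ :=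
  ∏ j ∈ Finset.range n, (1 - x ^ (j + 1))

/-- Gaussian binomial coefficient `[n choose k]_x`, zero unless `0 ≤ k ≤ n`. -/
noncomputable def qBin (x : RatFunc ℚ) (n k : ℤ) : RatFunc ℚ :=
  if 0 ≤ k ∧ k ≤ n then qPoch x n.toNat / (qPoch x k.toNat * qPoch x (n - k).toNat) else 0

/-- The `q`-trinomial coefficient `[L, b; a]_2` in base `x`. -/
noncomputable def qTri (x : RatFunc ℚ) (L : ℕ) (b a : ℤ) : RatFunc ℚ :=
  ∑ k ∈ Finset.range (L + 1),
    x ^ ((k : ℤ) * (k + b)) * qBin x (L : ℤ) (k : ℤ) * qBin x ((L : ℤ) - k) ((k : ℤ) + a)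

/-- The `q`-trinomial `T_n(L, a)`, written in terms of `s = q^{1/2}` (so the base is `s^2`):
`T_n(L,a) = ∑ s^{r(r-n)} (s²)_L / ((s²)_{(L-a-r)/2} (s²)_{(L+a-r)/2} (s²)_r)`,
the sum over `r ≥ 0` with `L - a - r` even and `r ≤ L - |a|`; zero for `|a| > L`. -/
noncomputable def qT (s : RatFunc ℚ) (n : ℤ) (L : ℕ) (a : ℤ) : RatFunc ℚ :=
  ∑ r ∈ Finset.range (L + 1),
    if Even ((L : ℤ) - a - r) ∧ (r : ℤ) ≤ (L : ℤ) - |a| then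
      s ^ ((r : ℤ) * ((r : ℤ) - n)) * qPoch (s ^ 2) L /
        (qPoch (s ^ 2) (((L : ℤ) - a - r) / 2).toNat *
          qPoch (s ^ 2) (((L : ℤ) + a - r) / 2).toNat * qPoch (s ^ 2) r)
    else 0

/-- The Cartan matrix of the Lie algebra `A_n`. -/
def cartanA (n : ℕ) (i j : Fin n) : ℤ :=
  if i = j then 2 else if |(i : ℤ) - (j : ℤ)| = 1 then -1 else 0

/-!
Both sides equal `∑ n, q ^ (n ^ 2 / 2) * [L choose n] * X n`, where the `X n` are the polynomials
of Andrews converging to the Göllnitz–Gordon series, given by `X 0 = 1`, `X 1 = 1 + q ^ (1 / 2)`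
and `X n = (1 + q ^ (n - 1 / 2)) * X (n - 1) + q ^ (n - 1) * X (n - 2)`.

The polynomials `X n` have a positive double-sum form and an alternating-sum form in the
`q`-trinomials `T_0(n, k)`; each is established by checking the recurrence, up to terms that
telescope. Transferring them to the two sides of the theorem is `q`-Vandermonde: on the left it
expands `[L + a choose n + a]`, and on the right it gives the summation formula
`∑ n, q ^ (n ^ 2 / 2) * [L choose n] * T_0(n, k) = q ^ (k ^ 2 / 2) * [2 L choose L - k]`.
Exponents here are half-integers, so the lemmas use `s = q ^ (1 / 2)` and base `s ^ 2`; the theorem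
has quarter-integer exponents, and its variable stands for `q ^ (1 / 4)`.
-/

section Finsum

variable {α β G M : Type*} [AddGroup G]

lemma finsum_comp_add_right [AddCommMonoid M] (f : G → M) (c : G) :
    ∑ᶠ i, f (i + c) = ∑ᶠ i, f i :=
  finsum_comp_equiv (Equiv.addRight c)

lemma finsum_comp_sub_right [AddCommMonoid M] (f : G → M) (c : G) :
    ∑ᶠ i, f (i - c) = ∑ᶠ i, f i :=
  finsum_comp_equiv (Equiv.subRight c)

lemma hasFiniteSupport_comp_add_right [Zero M] {f : G → M} (hf : f.HasFiniteSupport) (c : G) :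
    (fun i => f (i + c)).HasFiniteSupport :=
  hf.fun_comp_of_injective (add_left_injective c)

lemma finsum_sub_comp_add_right [AddCommGroup M] {f : G → M} (hf : f.HasFiniteSupport) (c : G) :
    ∑ᶠ i, (f i - f (i + c)) = 0 := by
  rw [finsum_sub_distrib hf (hasFiniteSupport_comp_add_right hf c), finsum_comp_add_right, sub_self]

lemma finsum_comm_of_hasFiniteSupport [AddCommMonoid M] {f : α → β → M}
    (hf : (Function.uncurry f).HasFiniteSupport) :
    ∑ᶠ a, ∑ᶠ b, f a b = ∑ᶠ b, ∑ᶠ a, f a b :=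
  calc ∑ᶠ a, ∑ᶠ b, f a b = ∑ᶠ z, Function.uncurry f z := (finsum_curry _ hf).symm
    _ = ∑ᶠ z : β × α, Function.uncurry f z.swap := (finsum_comp_equiv (Equiv.prodComm β α)).symm
    _ = ∑ᶠ b, ∑ᶠ a, f a b := finsum_curry _ (hf.fun_comp_of_injective Prod.swap_injective)

lemma finsum_finsum_comp_add_right [AddCommMonoid M] {f : G → β → M} (c : β → G)
    (hf : (Function.uncurry f).HasFiniteSupport) :
    ∑ᶠ i, ∑ᶠ b, f (i + c b) b = ∑ᶠ i, ∑ᶠ b, f i b := by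
  have h_inj : Function.Injective fun z : G × β => (z.1 + c z.2, z.2) := by
    rintro ⟨i, b⟩ ⟨i', b'⟩ h
    obtain ⟨h, rfl⟩ : i + c b = i' + c b' ∧ b = b' := by simpa using h
    rw [add_right_cancel h]
  have h_shift : (Function.uncurry fun i b => f (i + c b) b).HasFiniteSupport :=
    (hf.fun_comp_of_injective h_inj :)
  rw [finsum_comm_of_hasFiniteSupport hf, finsum_comm_of_hasFiniteSupport h_shift]
  exact finsum_congr fun b => finsum_comp_add_right (fun i => f i b) (c b)

lemma finsum_int_eq_sum_range [AddCommMonoid M] {f : ℤ → M} {n : ℕ}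
    (hf : ∀ i, f i ≠ 0 → 0 ≤ i ∧ i < n) : ∑ᶠ i, f i = ∑ i ∈ range n, f i := by
  have h_supp : f.support ⊆ ((range n).map Nat.castEmbedding : Finset ℤ) := by
    intro i hi
    obtain ⟨h0, hn⟩ := hf i hi
    lift i to ℕ using h0
    simpa using hn
  rw [finsum_eq_sum_of_support_subset f h_supp, sum_map]
  rfl

lemma finsum_finsum_int_eq_sum_range [AddCommMonoid M] {n : ℕ} (f : ℤ → β → M)
    (hf : ∀ i b, f i b ≠ 0 → 0 ≤ i ∧ i < n) :
    ∑ᶠ i, ∑ᶠ b, f i b = ∑ i ∈ range n, ∑ᶠ b, f i b := by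
  refine finsum_int_eq_sum_range (f := fun i => ∑ᶠ b, f i b) fun i hi => ?_
  obtain ⟨b, hb⟩ : ∃ b, f i b ≠ 0 := by
    by_contra! h
    exact hi (finsum_eq_zero_of_forall_eq_zero h)
  exact hf i b hb

end Finsum

section GaussianBinomial

variable {x : RatFunc ℚ}

lemma qPoch_zero (x : RatFunc ℚ) : qPoch x 0 = 1 := by
  simp [qPoch]

lemma qPoch_succ (x : RatFunc ℚ) (n : ℕ) : qPoch x (n + 1) = (1 - x ^ (n + 1)) * qPoch x n := by
  rw [qPoch, prod_range_succ, mul_comm, qPoch]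

lemma qPoch_ne_zero (hx : ¬IsOfFinOrder x) (n : ℕ) : qPoch x n ≠ 0 :=
  prod_ne_zero_iff.mpr fun j _ h =>
    hx (isOfFinOrder_iff_pow_eq_one.mpr ⟨j + 1, j.succ_pos, (sub_eq_zero.mp h).symm⟩)

/-- The reciprocal `1 / (x)_n` for an arbitrary integer index, with the usual convention that it
vanishes for `n < 0`. -/
noncomputable def qPochInv (x : RatFunc ℚ) (n : ℤ) : RatFunc ℚ :=
  if 0 ≤ n then (qPoch x n.toNat)⁻¹ else 0

lemma qPochInv_natCast (x : RatFunc ℚ) (n : ℕ) : qPochInv x n = (qPoch x n)⁻¹ := by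
  simp [qPochInv]

lemma qPochInv_zero (x : RatFunc ℚ) : qPochInv x 0 = 1 := by
  simp [qPochInv, qPoch_zero]

lemma qPochInv_of_neg (x : RatFunc ℚ) {n : ℤ} (hn : n < 0) : qPochInv x n = 0 :=
  if_neg hn.not_ge

lemma nonneg_of_qPochInv_ne_zero {n : ℤ} (h : qPochInv x n ≠ 0) : 0 ≤ n :=
  not_lt.mp fun hn => h (qPochInv_of_neg x hn)

lemma qPoch_mul_qPochInv (hx : ¬IsOfFinOrder x) (n : ℕ) : qPoch x n * qPochInv x n = 1 := by
  rw [qPochInv_natCast, mul_inv_cancel₀ (qPoch_ne_zero hx n)]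

lemma qPochInv_sub_one (hx : ¬IsOfFinOrder x) (n : ℤ) :
    qPochInv x (n - 1) = (1 - x ^ n) * qPochInv x n := by
  rcases lt_trichotomy n 0 with hn | rfl | hn
  · rw [qPochInv_of_neg x hn, qPochInv_of_neg x (by lia), mul_zero]
  · rw [qPochInv_of_neg x (by lia), zpow_zero, sub_self, zero_mul]
  · obtain ⟨m, rfl⟩ : ∃ m : ℕ, n = (m + 1 : ℕ) := ⟨(n - 1).toNat, by lia⟩
    have h_ne := qPoch_ne_zero hx (m + 1)
    rw [show ((m + 1 : ℕ) : ℤ) - 1 = m by lia, qPochInv_natCast, qPochInv_natCast, zpow_natCast]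
    rw [qPoch_succ] at h_ne ⊢
    rw [mul_inv, mul_inv_cancel_left₀ (left_ne_zero_of_mul h_ne)]

lemma qBin_eq_zero (x : RatFunc ℚ) {n k : ℤ} (h : ¬(0 ≤ k ∧ k ≤ n)) : qBin x n k = 0 :=
  if_neg h

lemma bounds_of_qBin_ne_zero {n k : ℤ} (h : qBin x n k ≠ 0) : 0 ≤ k ∧ k ≤ n :=
  not_imp_comm.mp (qBin_eq_zero x) h

lemma hasFiniteSupport_qBin (x : RatFunc ℚ) (n : ℤ) : (qBin x n).HasFiniteSupport :=
  (Set.finite_Icc 0 n).subset fun _ => bounds_of_qBin_ne_zero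

lemma qBin_natCast (x : RatFunc ℚ) (n : ℕ) (k : ℤ) :
    qBin x n k = qPoch x n * qPochInv x k * qPochInv x (n - k) := by
  by_cases h : 0 ≤ k ∧ k ≤ n
  · rw [qBin, if_pos h, qPochInv, if_pos h.1, qPochInv, if_pos (sub_nonneg.mpr h.2),
      Int.toNat_natCast, div_eq_mul_inv, mul_inv, mul_assoc]
  · rw [qBin_eq_zero x h]
    rcases lt_or_ge k 0 with hk | hk
    · rw [qPochInv_of_neg x hk, mul_zero, zero_mul]
    · rw [qPochInv_of_neg x (n := n - k) (by lia), mul_zero]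

lemma qBin_sub_right (x : RatFunc ℚ) (n k : ℤ) : qBin x n (n - k) = qBin x n k := by
  by_cases h : 0 ≤ k ∧ k ≤ n
  · rw [qBin, if_pos (by lia), qBin, if_pos h, sub_sub_cancel, mul_comm (qPoch x (n - k).toNat)]
  · rw [qBin_eq_zero x h, qBin_eq_zero x (by lia)]

lemma qBin_zero_right (hx : ¬IsOfFinOrder x) (n : ℕ) : qBin x n 0 = 1 := by
  rw [qBin_natCast, qPochInv_zero, sub_zero, mul_one, qPoch_mul_qPochInv hx]

lemma qBin_self (hx : ¬IsOfFinOrder x) (n : ℕ) : qBin x n n = 1 := by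
  rw [← qBin_sub_right, sub_self, qBin_zero_right hx]

lemma qBin_add_one_left (hx₀ : x ≠ 0) (hx : ¬IsOfFinOrder x) (n : ℕ) (k : ℤ) :
    qBin x (n + 1) k = qBin x n (k - 1) + x ^ k * qBin x n k := by
  have h_pow : x ^ (n + 1) = x ^ k * x ^ (n + 1 - k) := by
    rw [← zpow_add₀ hx₀, add_sub_cancel]
    exact_mod_cast rfl
  have h_num := qBin_natCast x (n + 1) k
  have h_left := qPochInv_sub_one hx k
  have h_right := qPochInv_sub_one hx (n + 1 - k)
  rw [show (n : ℤ) + 1 - k - 1 = n - k by ring] at h_right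
  push_cast at h_num
  rw [h_num, qBin_natCast, qBin_natCast, qPoch_succ, show (n : ℤ) - (k - 1) = n + 1 - k by ring,
    h_left, h_right, h_pow]
  ring

lemma qBin_add_one_left' (hx₀ : x ≠ 0) (hx : ¬IsOfFinOrder x) (n : ℕ) (k : ℤ) :
    qBin x (n + 1) k = qBin x n k + x ^ (n + 1 - k) * qBin x n (k - 1) := by
  rw [← qBin_sub_right, qBin_add_one_left hx₀ hx, ← qBin_sub_right x n k,
    ← qBin_sub_right x n (k - 1), show (n : ℤ) + 1 - k - 1 = n - k by ring,
    show (n : ℤ) - (k - 1) = n + 1 - k by ring]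

lemma qBin_add_add (hx₀ : x ≠ 0) (hx : ¬IsOfFinOrder x) (m n : ℕ) (k : ℤ) :
    qBin x (m + n) (m + k) = ∑ᶠ l : ℤ, x ^ (l * (l + k)) * qBin x m l * qBin x n (l + k) := by
  have h_fin (m : ℕ) (k : ℤ) :
      (fun l : ℤ => x ^ (l * (l + k)) * qBin x m l * qBin x n (l + k)).HasFiniteSupport :=
    (hasFiniteSupport_qBin x m).subset fun l h => right_ne_zero_of_mul (left_ne_zero_of_mul h)
  induction m generalizing k with
  | zero =>
    rw [finsum_eq_single _ 0]
    · simpa using qBin_zero_right hx 0 ▸ (one_mul (qBin x n k)).symm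
    · intro l hl
      rw [qBin_eq_zero x (n := (0 : ℕ)) (by push_cast; lia), mul_zero, zero_mul]
  | succ m ih =>
    have h_pascal (l : ℤ) : x ^ (l * (l + k)) * qBin x (m + 1 : ℕ) l * qBin x n (l + k) =
        x ^ (l * (l + k)) * qBin x m l * qBin x n (l + k) +
          x ^ (m + 1 + k) * (x ^ ((l - 1) * (l - 1 + (k + 1))) * qBin x m (l - 1) *
            qBin x n (l - 1 + (k + 1))) := by
      have h_pow : x ^ (l * (l + k)) * x ^ (m + 1 - l) =
          x ^ (m + 1 + k) * x ^ ((l - 1) * (l - 1 + (k + 1))) := by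
        rw [← zpow_add₀ hx₀, ← zpow_add₀ hx₀]
        ring_nf
      rw [show l - 1 + (k + 1) = l + k by ring] at h_pow ⊢
      push_cast
      rw [qBin_add_one_left' hx₀ hx]
      linear_combination qBin x m (l - 1) * qBin x n (l + k) * h_pow
    calc qBin x ((m + 1 : ℕ) + n) ((m + 1 : ℕ) + k)
        = qBin x ((m + n : ℕ) + 1) (m + 1 + k) := by push_cast; ring_nf
      _ = qBin x (m + n) (m + k) + x ^ (m + 1 + k) * qBin x (m + n) (m + (k + 1)) := by
        rw [qBin_add_one_left hx₀ hx]
        push_cast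
        ring_nf
      _ = _ := by
        rw [ih, ih, finsum_congr h_pascal, finsum_add_distrib (h_fin m k)
          (((h_fin m (k + 1)).fun_comp_of_injective (sub_left_injective (b := 1))).subset
            fun _ => right_ne_zero_of_mul), ← mul_finsum,
          finsum_comp_sub_right
            (fun l => x ^ (l * (l + (k + 1))) * qBin x m l * qBin x n (l + (k + 1)))]

end GaussianBinomial

section Trinomial

variable {s : RatFunc ℚ}

lemma not_isOfFinOrder_sq (hs : ¬IsOfFinOrder s) : ¬IsOfFinOrder (s ^ 2) :=
  fun h => hs (h.of_pow two_ne_zero)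

lemma sq_zpow (s : RatFunc ℚ) (n : ℤ) : (s ^ 2) ^ n = s ^ (2 * n) := by
  rw [zpow_mul, zpow_ofNat]

/-- The summand `s ^ (r ^ 2) / ((s²)_u (s²)_v (s²)_r)` of the trinomial `T_0`, freed from the
constraints that tie `u`, `v`, `r` to the indices of `T_0`, so that recurrences of `T_0` can be
checked summand by summand. -/
noncomputable def trinomialTerm (s : RatFunc ℚ) (u v r : ℤ) : RatFunc ℚ :=
  s ^ (r ^ 2) * qPochInv (s ^ 2) u * qPochInv (s ^ 2) v * qPochInv (s ^ 2) r

lemma nonneg_of_trinomialTerm_ne_zero {u v r : ℤ} (h : trinomialTerm s u v r ≠ 0) :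
    0 ≤ u ∧ 0 ≤ v ∧ 0 ≤ r := by
  simp only [trinomialTerm, mul_ne_zero_iff] at h
  exact ⟨nonneg_of_qPochInv_ne_zero h.1.1.2, nonneg_of_qPochInv_ne_zero h.1.2,
    nonneg_of_qPochInv_ne_zero h.2⟩

lemma trinomialTerm_sub_one_left (hs : ¬IsOfFinOrder s) (u v r : ℤ) :
    trinomialTerm s (u - 1) v r = (1 - s ^ (2 * u)) * trinomialTerm s u v r := by
  rw [trinomialTerm, qPochInv_sub_one (not_isOfFinOrder_sq hs), sq_zpow, trinomialTerm]
  ring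

lemma trinomialTerm_sub_one_middle (hs : ¬IsOfFinOrder s) (u v r : ℤ) :
    trinomialTerm s u (v - 1) r = (1 - s ^ (2 * v)) * trinomialTerm s u v r := by
  rw [trinomialTerm, qPochInv_sub_one (not_isOfFinOrder_sq hs), sq_zpow, trinomialTerm]
  ring

lemma trinomialTerm_sub_one_right (hs₀ : s ≠ 0) (hs : ¬IsOfFinOrder s) (u v r : ℤ) :
    s ^ (2 * r - 1) * trinomialTerm s u v (r - 1) =
      (1 - s ^ (2 * r)) * trinomialTerm s u v r := by
  have h_pow : s ^ (2 * r - 1) * s ^ ((r - 1) ^ 2) = s ^ (r ^ 2) := by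
    rw [← zpow_add₀ hs₀]
    ring_nf
  rw [trinomialTerm, qPochInv_sub_one (not_isOfFinOrder_sq hs), sq_zpow, trinomialTerm, ← h_pow]
  ring

lemma trinomialTerm_natCast (s : RatFunc ℚ) (u v : ℤ) (r : ℕ) :
    trinomialTerm s u v r = if 0 ≤ u ∧ 0 ≤ v then
      s ^ ((r : ℤ) ^ 2) / (qPoch (s ^ 2) u.toNat * qPoch (s ^ 2) v.toNat * qPoch (s ^ 2) r)
    else 0 := by
  split_ifs with h
  · rw [trinomialTerm, qPochInv, if_pos h.1, qPochInv, if_pos h.2, qPochInv_natCast]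
    simp only [div_eq_mul_inv, mul_inv, mul_assoc]
  · by_contra h_ne
    have h_nonneg := nonneg_of_trinomialTerm_ne_zero h_ne
    exact h ⟨h_nonneg.1, h_nonneg.2.1⟩

lemma qT_zero_eq_sum_indicator (s : RatFunc ℚ) (L : ℕ) (k : ℤ) :
    qT s 0 L k = ∑ r ∈ range (L + 1), (Set.range fun u : ℤ => L - 2 * u - k).indicator
      (fun r => qPoch (s ^ 2) L * trinomialTerm s ((L - k - r) / 2) ((L + k - r) / 2) r) r := by
  refine sum_congr rfl fun r _ => ?_
  have h_mem : (r : ℤ) ∈ (Set.range fun u : ℤ => L - 2 * u - k) ↔ Even ((L : ℤ) - k - r) :=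
    ⟨fun ⟨u, hu⟩ => ⟨u, by lia⟩, fun ⟨u, hu⟩ => ⟨u, by lia⟩⟩
  have h_bound (h : Even ((L : ℤ) - k - r)) :
      0 ≤ (L - k - r) / 2 ∧ 0 ≤ (L + k - r) / 2 ↔ (r : ℤ) ≤ L - |k| := by
    obtain ⟨u, hu⟩ := h
    rw [le_sub_comm, abs_le]
    lia
  classical
  rw [Set.indicator_apply, trinomialTerm_natCast]
  simp only [h_mem, ite_and]
  refine ite_congr rfl (fun h => ?_) fun _ => rfl
  simp only [← ite_and, h_bound h]
  rw [mul_ite, mul_zero, sub_zero, ← sq, mul_comm (s ^ _), mul_div_assoc]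

/-- The trinomial `T_0(n, k)` divided by `(s²)_n`, as a sum over all integers `u`; it makes sense
for every integer `n`, and its recurrences hold without boundary cases. -/
noncomputable def trinomialSum (s : RatFunc ℚ) (n k : ℤ) : RatFunc ℚ :=
  ∑ᶠ u : ℤ, trinomialTerm s u (u + k) (n - 2 * u - k)

lemma qT_zero_eq_trinomialSum (s : RatFunc ℚ) (L : ℕ) (k : ℤ) :
    qT s 0 L k = qPoch (s ^ 2) L * trinomialSum s L k := by
  set f : ℤ → RatFunc ℚ := fun r =>
    qPoch (s ^ 2) L * trinomialTerm s ((L - k - r) / 2) ((L + k - r) / 2) r with hf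
  have h_inj : Function.Injective fun u : ℤ => L - 2 * u - k := fun u v h => by
    simpa using h
  calc qT s 0 L k = ∑ r ∈ range (L + 1), (Set.range fun u : ℤ => L - 2 * u - k).indicator f r :=
        qT_zero_eq_sum_indicator s L k
    _ = ∑ᶠ r, (Set.range fun u : ℤ => L - 2 * u - k).indicator f r := by
      refine (finsum_int_eq_sum_range fun r hr => ?_).symm
      obtain ⟨⟨u, rfl⟩, h⟩ := Set.indicator_apply_ne_zero.mp hr
      have h_nonneg := nonneg_of_trinomialTerm_ne_zero (right_ne_zero_of_mul h)
      dsimp only at h_nonneg ⊢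
      lia
    _ = ∑ᶠ u : ℤ, f (L - 2 * u - k) := by rw [← finsum_mem_def, finsum_mem_range h_inj]
    _ = _ := by
      rw [trinomialSum, mul_finsum]
      refine finsum_congr fun u => ?_
      rw [hf]
      dsimp only
      congr 2 <;> lia

lemma qT_zero_eq_zero (s : RatFunc ℚ) {L : ℕ} {k : ℤ} (h : L < |k|) : qT s 0 L k = 0 :=
  sum_eq_zero fun r _ => if_neg fun hr => by linarith [hr.2, r.cast_nonneg (α := ℤ)]

lemma trinomialSum_eq_finsum_sub_one (s : RatFunc ℚ) (n k : ℤ) :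
    trinomialSum s n k = ∑ᶠ u : ℤ, trinomialTerm s (u - 1) (u + k - 1) (n + 2 - 2 * u - k) := by
  rw [trinomialSum,
    ← finsum_comp_sub_right (fun u => trinomialTerm s u (u + k) (n - 2 * u - k)) 1]
  congr! 3 with u <;> ring

lemma hasFiniteSupport_trinomialTerm {u v r : ℤ → ℤ} (n : ℤ)
    (h : ∀ i, 0 ≤ u i → 0 ≤ v i → 0 ≤ r i → 0 ≤ i ∧ i ≤ n) :
    (fun i => trinomialTerm s (u i) (v i) (r i)).HasFiniteSupport :=
  (Set.finite_Icc 0 n).subset fun i hi =>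
    have h_nonneg := nonneg_of_trinomialTerm_ne_zero hi
    h i h_nonneg.1 h_nonneg.2.1 h_nonneg.2.2

lemma one_sub_zpow_mul_trinomialTerm (hs₀ : s ≠ 0) (hs : ¬IsOfFinOrder s) (u v r : ℤ) :
    (1 - s ^ (2 * (u + v + r))) * trinomialTerm s u v r =
      trinomialTerm s u (v - 1) r + trinomialTerm s (u - 1) v r +
        s ^ (2 * (u + v + r) - 1) * trinomialTerm s u v (r - 1) -
        trinomialTerm s (u - 1) (v - 1) r := by
  have h_right := trinomialTerm_sub_one_right hs₀ hs u v r
  have h_pow : s ^ (2 * (u + v + r)) = s ^ (2 * u) * s ^ (2 * v) * s ^ (2 * r) := by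
    rw [← zpow_add₀ hs₀, ← zpow_add₀ hs₀]
    ring_nf
  have h_pow' : s ^ (2 * (u + v + r) - 1) = s ^ (2 * u) * s ^ (2 * v) * s ^ (2 * r - 1) := by
    rw [← zpow_add₀ hs₀, ← zpow_add₀ hs₀]
    ring_nf
  rw [trinomialTerm_sub_one_left hs, trinomialTerm_sub_one_left hs,
    trinomialTerm_sub_one_middle hs, h_pow, h_pow']
  linear_combination -(s ^ (2 * u) * s ^ (2 * v)) * h_right

lemma one_sub_zpow_mul_trinomialSum (hs₀ : s ≠ 0) (hs : ¬IsOfFinOrder s) (n k : ℤ) :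
    (1 - s ^ (2 * n)) * trinomialSum s n k =
      trinomialSum s (n - 1) (k - 1) + trinomialSum s (n - 1) (k + 1) +
        s ^ (2 * n - 1) * trinomialSum s (n - 1) k - trinomialSum s (n - 2) k := by
  have h_term (u : ℤ) := one_sub_zpow_mul_trinomialTerm hs₀ hs u (u + k) (n - 2 * u - k)
  have h_index (u : ℤ) : u + (u + k) + (n - 2 * u - k) = n := by ring
  simp only [h_index] at h_term
  have h_fin (u v r : ℤ → ℤ) (h : ∀ i, 0 ≤ u i → 0 ≤ v i → 0 ≤ r i → 0 ≤ i ∧ i ≤ n) :=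
    hasFiniteSupport_trinomialTerm (s := s) n h
  have h_left : trinomialSum s (n - 1) (k - 1) =
      ∑ᶠ u : ℤ, trinomialTerm s u (u + k - 1) (n - 2 * u - k) := by
    rw [trinomialSum]
    congr! 3 with u <;> ring
  have h_right : trinomialSum s (n - 1) (k + 1) =
      ∑ᶠ u : ℤ, trinomialTerm s (u - 1) (u + k) (n - 2 * u - k) := by
    rw [trinomialSum_eq_finsum_sub_one]
    congr! 3 with u <;> ring
  have h_middle : trinomialSum s (n - 1) k =
      ∑ᶠ u : ℤ, trinomialTerm s u (u + k) (n - 2 * u - k - 1) := by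
    rw [trinomialSum]
    congr! 3 with u; ring
  have h_corner : trinomialSum s (n - 2) k =
      ∑ᶠ u : ℤ, trinomialTerm s (u - 1) (u + k - 1) (n - 2 * u - k) := by
    rw [trinomialSum_eq_finsum_sub_one]
    congr! 3 with u; ring
  rw [h_left, h_right, h_middle, h_corner, trinomialSum, mul_finsum, finsum_congr h_term,
    finsum_sub_distrib, finsum_add_distrib, finsum_add_distrib, mul_finsum]
  all_goals fun_prop (disch := lia)

lemma trinomialTerm_telescope (hs₀ : s ≠ 0) (hs : ¬IsOfFinOrder s) (u v r : ℤ) :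
    ((1 - s ^ (2 * (u + v + r))) * trinomialTerm s u v r - trinomialTerm s u (v - 1) r) -
      s ^ (2 * (v - u) + 1) * ((1 - s ^ (2 * (u + v + r))) * trinomialTerm s u (v + 1) (r - 1) -
        trinomialTerm s (u - 1) (v + 1) (r - 1)) =
      s ^ (2 * (v + r)) * trinomialTerm s (u - 1) v r -
        s ^ (2 * (v + r - 1)) * trinomialTerm s u (v + 1) (r - 2) := by
  have h_u := zpow_ne_zero (2 * u) hs₀
  have h_middle := trinomialTerm_sub_one_middle hs u (v + 1) r
  have h_right := trinomialTerm_sub_one_right hs₀ hs u (v + 1) r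
  have h_right' := trinomialTerm_sub_one_right hs₀ hs u (v + 1) (r - 1)
  rw [add_sub_cancel_right] at h_middle
  rw [show r - 1 - 1 = r - 2 by ring] at h_right'
  rw [trinomialTerm_sub_one_left hs, trinomialTerm_sub_one_left hs,
    trinomialTerm_sub_one_middle hs, h_middle]
  simp only [mul_add (2 : ℤ), mul_sub (2 : ℤ), mul_one, zpow_add₀ hs₀, zpow_sub₀ hs₀,
    zpow_ofNat] at h_right h_right' ⊢
  set U := s ^ (2 * u)
  set V := s ^ (2 * v)
  linear_combination (norm := (field_simp; ring)) -V * (1 - s ^ 2 * V) * h_right + s * V * h_right'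

lemma trinomialSum_sub (hs₀ : s ≠ 0) (hs : ¬IsOfFinOrder s) (n k : ℤ) :
    (1 - s ^ (2 * n)) * trinomialSum s n k - trinomialSum s (n - 1) (k - 1) =
      s ^ (2 * k + 1) *
        ((1 - s ^ (2 * n)) * trinomialSum s n (k + 1) - trinomialSum s (n - 1) (k + 2)) := by
  set b : ℤ → RatFunc ℚ := fun u =>
    s ^ (2 * (n - u)) * trinomialTerm s (u - 1) (u + k) (n - 2 * u - k)
  have h_term (u : ℤ) : ((1 - s ^ (2 * n)) * trinomialTerm s u (u + k) (n - 2 * u - k) -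
      trinomialTerm s u (u + k - 1) (n - 2 * u - k)) - s ^ (2 * k + 1) *
        ((1 - s ^ (2 * n)) * trinomialTerm s u (u + k + 1) (n - 2 * u - k - 1) -
          trinomialTerm s (u - 1) (u + k + 1) (n - 2 * u - k - 1)) = b u - b (u + 1) := by
    convert trinomialTerm_telescope hs₀ hs u (u + k) (n - 2 * u - k) using 4 <;> ring_nf
  have h_fin (u v r : ℤ → ℤ) (h : ∀ i, 0 ≤ u i → 0 ≤ v i → 0 ≤ r i → 0 ≤ i ∧ i ≤ n) :=
    hasFiniteSupport_trinomialTerm (s := s) n h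
  have h_up : trinomialSum s (n - 1) (k - 1) =
      ∑ᶠ u : ℤ, trinomialTerm s u (u + k - 1) (n - 2 * u - k) := by
    rw [trinomialSum]
    congr! 3 with u <;> ring
  have h_right : trinomialSum s n (k + 1) =
      ∑ᶠ u : ℤ, trinomialTerm s u (u + k + 1) (n - 2 * u - k - 1) := by
    rw [trinomialSum]
    congr! 3 with u <;> ring
  have h_diag : trinomialSum s (n - 1) (k + 2) =
      ∑ᶠ u : ℤ, trinomialTerm s (u - 1) (u + k + 1) (n - 2 * u - k - 1) := by
    rw [trinomialSum_eq_finsum_sub_one]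
    congr! 3 with u <;> ring
  have h_telescope : ∑ᶠ u, (b u - b (u + 1)) = 0 :=
    finsum_sub_comp_add_right (by fun_prop (disch := lia)) 1
  rw [← sub_eq_zero, ← h_telescope, ← finsum_congr h_term, h_up, h_right, h_diag, trinomialSum,
    finsum_sub_distrib, ← mul_finsum, finsum_sub_distrib, finsum_sub_distrib, ← mul_finsum,
    ← mul_finsum]
  all_goals fun_prop (disch := lia)

lemma qT_zero_add_two (hs₀ : s ≠ 0) (hs : ¬IsOfFinOrder s) (L : ℕ) (k : ℤ) :
    qT s 0 (L + 2) k = qT s 0 (L + 1) (k - 1) + qT s 0 (L + 1) (k + 1) +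
      s ^ (2 * L + 3) * qT s 0 (L + 1) k + (s ^ (2 * L + 2) - 1) * qT s 0 L k := by
  have h_rec := one_sub_zpow_mul_trinomialSum hs₀ hs (L + 2 : ℕ) k
  have h_index : ((L + 2 : ℕ) : ℤ) - 1 = (L + 1 : ℕ) ∧ ((L + 2 : ℕ) : ℤ) - 2 = L := by lia
  have h_pow : s ^ (2 * ((L + 2 : ℕ) : ℤ)) = s ^ (2 * L + 4) := by
    exact_mod_cast rfl
  have h_pow' : s ^ (2 * ((L + 2 : ℕ) : ℤ) - 1) = s ^ (2 * L + 3) := by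
    rw [← zpow_natCast]
    push_cast
    ring_nf
  rw [h_index.1, h_index.2, h_pow, h_pow'] at h_rec
  simp only [qT_zero_eq_trinomialSum, qPoch_succ]
  linear_combination (1 - (s ^ 2) ^ (L + 1)) * qPoch (s ^ 2) L * h_rec

lemma qT_zero_add_one_sub (hs₀ : s ≠ 0) (hs : ¬IsOfFinOrder s) (L : ℕ) (k : ℤ) :
    qT s 0 (L + 1) k - qT s 0 L (k - 1) =
      s ^ (2 * k + 1) * (qT s 0 (L + 1) (k + 1) - qT s 0 L (k + 2)) := by
  have h_rec := trinomialSum_sub hs₀ hs (L + 1 : ℕ) k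
  have h_index : ((L + 1 : ℕ) : ℤ) - 1 = L := by lia
  have h_pow : s ^ (2 * ((L + 1 : ℕ) : ℤ)) = s ^ (2 * L + 2) := by
    exact_mod_cast rfl
  rw [h_index, h_pow] at h_rec
  simp only [qT_zero_eq_trinomialSum, qPoch_succ]
  linear_combination qPoch (s ^ 2) L * h_rec

lemma hasFiniteSupport_qT_zero (s : RatFunc ℚ) (L : ℕ) {k : ℤ → ℤ} (hk : Function.Injective k) :
    (fun j => qT s 0 L (k j)).HasFiniteSupport :=
  ((Set.finite_Icc (-(L : ℤ)) L).preimage hk.injOn).subset fun _ h =>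
    abs_le.mp (not_lt.mp (not_imp_not.mpr (qT_zero_eq_zero s) h))

lemma qT_zero_zero_zero (s : RatFunc ℚ) : qT s 0 0 0 = 1 := by
  simp [qT, qPoch]

lemma qT_zero_one_zero (hs : ¬IsOfFinOrder s) : qT s 0 1 0 = s := by
  have h_ne := qPoch_ne_zero (not_isOfFinOrder_sq hs) 1
  have h_odd : ¬Even (1 : ℤ) := by decide
  simp [qT, sum_range_succ, qPoch_zero, h_ne, h_odd]

lemma qT_zero_one_one (hs : ¬IsOfFinOrder s) : qT s 0 1 1 = 1 := by
  have h_ne := qPoch_ne_zero (not_isOfFinOrder_sq hs) 1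
  simp [qT, sum_range_succ, qPoch_zero, h_ne]

end Trinomial

section GollnitzGordon

/-- The polynomials `1, 1 + s, …` of Andrews, finite versions of the Göllnitz–Gordon series in the
variable `s = q^{1/2}`: they satisfy `X_n = (1 + q^{n - 1/2}) X_{n-1} + q^{n-1} X_{n-2}`. -/
def gollnitzGordon {R : Type*} [CommSemiring R] (s : R) : ℕ → R
  | 0 => 1
  | 1 => 1 + s
  | n + 2 => (1 + s ^ (2 * n + 3)) * gollnitzGordon s (n + 1) +
      s ^ (2 * n + 2) * gollnitzGordon s n

lemma eq_gollnitzGordon {R : Type*} [CommSemiring R] {s : R} {a : ℕ → R} (h_zero : a 0 = 1)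
    (h_one : a 1 = 1 + s)
    (h_rec : ∀ n, a (n + 2) = (1 + s ^ (2 * n + 3)) * a (n + 1) + s ^ (2 * n + 2) * a n) (n : ℕ) :
    a n = gollnitzGordon s n := by
  induction n using Nat.twoStepInduction with
  | zero => exact h_zero
  | one => exact h_one
  | more n ih ih' => rw [h_rec, ih, ih', gollnitzGordon]

end GollnitzGordon

section Bosonic

variable {s : RatFunc ℚ}

/-- The coefficient of the trinomials with index `4 j` and `4 j + 1` in the alternating-sum
formula for the Göllnitz–Gordon polynomials. -/
noncomputable def bosonicWeight (s : RatFunc ℚ) (j : ℤ) : RatFunc ℚ :=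
  (-1) ^ j * s ^ (j * (4 * j + 1))

lemma bosonicWeight_zero (s : RatFunc ℚ) : bosonicWeight s 0 = 1 := by
  simp [bosonicWeight]

lemma bosonicWeight_add_one (hs₀ : s ≠ 0) (j : ℤ) :
    bosonicWeight s (j + 1) = -s ^ (8 * j + 5) * bosonicWeight s j := by
  have h_pow : s ^ ((j + 1) * (4 * (j + 1) + 1)) = s ^ (8 * j + 5) * s ^ (j * (4 * j + 1)) := by
    rw [← zpow_add₀ hs₀]
    ring_nf
  rw [bosonicWeight, bosonicWeight, h_pow, zpow_add_one₀ (by norm_num)]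
  ring

lemma finsum_bosonicWeight_mul_sub (hs₀ : s ≠ 0) (hs : ¬IsOfFinOrder s) (n : ℕ) :
    ∑ᶠ j : ℤ, bosonicWeight s j * ((qT s 0 (n + 1) (4 * j - 1) - qT s 0 n (4 * j)) +
      (qT s 0 (n + 1) (4 * j + 2) - qT s 0 n (4 * j + 1))) = 0 := by
  set d : ℤ → RatFunc ℚ := fun j =>
    bosonicWeight s j * (qT s 0 (n + 1) (4 * j - 1) - qT s 0 n (4 * j)) with hd
  have h_term (j : ℤ) : bosonicWeight s j *
      ((qT s 0 (n + 1) (4 * j - 1) - qT s 0 n (4 * j)) +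
        (qT s 0 (n + 1) (4 * j + 2) - qT s 0 n (4 * j + 1))) = d j - d (j + 1) := by
    have h_rec := qT_zero_add_one_sub hs₀ hs n (4 * j + 2)
    rw [show 4 * j + 2 - 1 = 4 * j + 1 by ring, show 2 * (4 * j + 2) + 1 = 8 * j + 5 by ring,
      show 4 * j + 2 + 1 = 4 * (j + 1) - 1 by ring,
      show 4 * j + 2 + 2 = 4 * (j + 1) by ring] at h_rec
    simp only [hd, bosonicWeight_add_one hs₀]
    linear_combination bosonicWeight s j * h_rec
  have h_fin (L : ℕ) {k : ℤ → ℤ} (hk : Function.Injective k) := hasFiniteSupport_qT_zero s L hk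
  rw [finsum_congr h_term, finsum_sub_comp_add_right]
  fun_prop (disch := intro i j h; lia)

lemma finsum_bosonicWeight_mul_add_two (hs₀ : s ≠ 0) (hs : ¬IsOfFinOrder s) (n : ℕ) :
    ∑ᶠ j : ℤ, bosonicWeight s j * (qT s 0 (n + 2) (4 * j) + qT s 0 (n + 2) (4 * j + 1)) =
      (1 + s ^ (2 * n + 3)) *
          ∑ᶠ j : ℤ, bosonicWeight s j * (qT s 0 (n + 1) (4 * j) + qT s 0 (n + 1) (4 * j + 1)) +
        s ^ (2 * n + 2) *
          ∑ᶠ j : ℤ, bosonicWeight s j * (qT s 0 n (4 * j) + qT s 0 n (4 * j + 1)) := by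
  have h_term (j : ℤ) :
      bosonicWeight s j * (qT s 0 (n + 2) (4 * j) + qT s 0 (n + 2) (4 * j + 1)) =
        (1 + s ^ (2 * n + 3)) *
            (bosonicWeight s j * (qT s 0 (n + 1) (4 * j) + qT s 0 (n + 1) (4 * j + 1))) +
          s ^ (2 * n + 2) * (bosonicWeight s j * (qT s 0 n (4 * j) + qT s 0 n (4 * j + 1))) +
          bosonicWeight s j * ((qT s 0 (n + 1) (4 * j - 1) - qT s 0 n (4 * j)) +
            (qT s 0 (n + 1) (4 * j + 2) - qT s 0 n (4 * j + 1))) := by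
    rw [qT_zero_add_two hs₀ hs, qT_zero_add_two hs₀ hs, add_sub_cancel_right,
      show 4 * j + 1 + 1 = 4 * j + 2 by ring]
    ring
  have h_fin (L : ℕ) {k : ℤ → ℤ} (hk : Function.Injective k) := hasFiniteSupport_qT_zero s L hk
  rw [finsum_congr h_term, finsum_add_distrib, finsum_add_distrib, mul_finsum, mul_finsum,
    finsum_bosonicWeight_mul_sub hs₀ hs, add_zero]
  all_goals fun_prop (disch := intro i j h; lia)

lemma finsum_bosonicWeight_mul (hs₀ : s ≠ 0) (hs : ¬IsOfFinOrder s) (n : ℕ) :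
    ∑ᶠ j : ℤ, bosonicWeight s j * (qT s 0 n (4 * j) + qT s 0 n (4 * j + 1)) =
      gollnitzGordon s n := by
  have h_single {n : ℕ} (hn : n ≤ 1) :
      ∑ᶠ j : ℤ, bosonicWeight s j * (qT s 0 n (4 * j) + qT s 0 n (4 * j + 1)) =
        qT s 0 n 0 + qT s 0 n 1 := by
    rw [finsum_eq_single _ 0, bosonicWeight_zero, one_mul, mul_zero, zero_add]
    intro j hj
    rw [qT_zero_eq_zero s (lt_abs.mpr (by lia)), qT_zero_eq_zero s (lt_abs.mpr (by lia)),
      add_zero, mul_zero]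
  refine eq_gollnitzGordon
    (a := fun n => ∑ᶠ j : ℤ, bosonicWeight s j * (qT s 0 n (4 * j) + qT s 0 n (4 * j + 1)))
    ?_ ?_ (finsum_bosonicWeight_mul_add_two hs₀ hs) n
  · rw [h_single zero_le_one, qT_zero_zero_zero, qT_zero_eq_zero s (by norm_num), add_zero]
  · rw [h_single le_rfl, qT_zero_one_zero hs, qT_zero_one_one hs, add_comm]

end Bosonic

section Fermionic

variable {s : RatFunc ℚ}

/-- The summand of the fermionic (positive double sum) form of the Göllnitz–Gordon polynomials;
`z = (a, b)` ranges over all pairs of integers. -/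
noncomputable def fermionicTerm (s : RatFunc ℚ) (n : ℕ) (z : ℤ × ℤ) : RatFunc ℚ :=
  s ^ (z.1 ^ 2 + z.2 ^ 2) * qBin (s ^ 2) z.1 z.2 * qBin (s ^ 2) (n - z.2) z.1

lemma bounds_of_fermionicTerm_ne_zero {n : ℕ} {z : ℤ × ℤ} (h : fermionicTerm s n z ≠ 0) :
    0 ≤ z.2 ∧ z.2 ≤ z.1 ∧ z.1 ≤ n - z.2 := by
  have h_left := bounds_of_qBin_ne_zero (right_ne_zero_of_mul (left_ne_zero_of_mul h))
  exact ⟨h_left.1, h_left.2, (bounds_of_qBin_ne_zero (right_ne_zero_of_mul h)).2⟩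

lemma hasFiniteSupport_fermionicTerm (s : RatFunc ℚ) (n : ℕ) :
    (fermionicTerm s n).HasFiniteSupport := by
  refine (Set.finite_Icc ((0 : ℤ), (0 : ℤ)) (n, n)).subset fun z hz => ?_
  have h_bounds := bounds_of_fermionicTerm_ne_zero hz
  exact ⟨⟨by dsimp only; lia, by dsimp only; lia⟩, ⟨by dsimp only; lia, by dsimp only; lia⟩⟩

lemma fermionicTerm_eq_zero (s : RatFunc ℚ) {n : ℕ} {z : ℤ × ℤ}
    (h : ¬(0 ≤ z.2 ∧ z.2 ≤ z.1 ∧ z.1 ≤ n - z.2)) : fermionicTerm s n z = 0 :=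
  not_imp_comm.mp bounds_of_fermionicTerm_ne_zero h

lemma fermionicTerm_add_two_of_pos (hs₀ : s ≠ 0) (hs : ¬IsOfFinOrder s) {n : ℕ} {a b : ℤ}
    (ha : 1 ≤ a) (hb : b ≤ n + 1) :
    fermionicTerm s (n + 2) (a, b) = fermionicTerm s (n + 1) (a, b) +
      s ^ (2 * n + 3) * fermionicTerm s (n + 1) (a - 1, b) +
      s ^ (2 * n + 2) * fermionicTerm s n (a - 1, b - 1) := by
  have hx₀ : s ^ 2 ≠ 0 := pow_ne_zero 2 hs₀
  have hx := not_isOfFinOrder_sq hs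
  obtain ⟨a, rfl⟩ : ∃ a' : ℕ, a = a' + 1 := ⟨(a - 1).toNat, by lia⟩
  obtain ⟨m, hm⟩ : ∃ m : ℕ, (m : ℤ) = n + 1 - b := ⟨(n + 1 - b).toNat, by lia⟩
  have h_pow : s ^ ((a + 1 : ℤ) ^ 2 + b ^ 2) * s ^ (2 * (m + 1 - (a + 1) : ℤ)) =
      s ^ (2 * n + 2) * s ^ ((a : ℤ) ^ 2 + (b - 1) ^ 2) := by
    rw [← zpow_natCast, ← zpow_add₀ hs₀, ← zpow_add₀ hs₀, hm]
    push_cast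
    ring_nf
  have h_pow' : s ^ (2 * n + 3) * s ^ ((a : ℤ) ^ 2 + b ^ 2) =
      s ^ (2 * n + 2) * s ^ ((a : ℤ) ^ 2 + (b - 1) ^ 2) * s ^ (2 * b) := by
    rw [← zpow_natCast, ← zpow_natCast, ← zpow_add₀ hs₀, ← zpow_add₀ hs₀, ← zpow_add₀ hs₀]
    push_cast
    ring_nf
  have h_right := qBin_add_one_left' hx₀ hx m (a + 1)
  have h_left := qBin_add_one_left hx₀ hx a b
  rw [add_sub_cancel_right, sq_zpow] at h_right
  rw [sq_zpow] at h_left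
  simp only [fermionicTerm, add_sub_cancel_right]
  push_cast
  rw [show (n : ℤ) + 2 - b = m + 1 by lia, show (n : ℤ) - (b - 1) = m by lia, ← hm, h_right]
  linear_combination qBin (s ^ 2) (a + 1) b * qBin (s ^ 2) m a * h_pow -
    qBin (s ^ 2) a b * qBin (s ^ 2) m a * h_pow' +
    s ^ (2 * n + 2) * s ^ ((a : ℤ) ^ 2 + (b - 1) ^ 2) * qBin (s ^ 2) m a * h_left

lemma fermionicTerm_zero (hs : ¬IsOfFinOrder s) (n : ℕ) : fermionicTerm s n (0, 0) = 1 := by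
  have hx := not_isOfFinOrder_sq hs
  simpa [fermionicTerm, qBin_zero_right hx] using qBin_zero_right hx 0

lemma fermionicTerm_add_two (hs₀ : s ≠ 0) (hs : ¬IsOfFinOrder s) (n : ℕ) (z : ℤ × ℤ) :
    fermionicTerm s (n + 2) z = fermionicTerm s (n + 1) z +
      s ^ (2 * n + 3) * fermionicTerm s (n + 1) (z - (1, 0)) +
      s ^ (2 * n + 2) * fermionicTerm s n (z - (1, 1)) := by
  obtain ⟨a, b⟩ := z
  simp only [Prod.mk_sub_mk, sub_zero]
  by_cases h_pos : 1 ≤ a ∧ b ≤ n + 1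
  · exact fermionicTerm_add_two_of_pos hs₀ hs h_pos.1 h_pos.2
  rw [fermionicTerm_eq_zero s (z := (a - 1, b)) (by push_cast; lia),
    fermionicTerm_eq_zero s (z := (a - 1, b - 1)) (by dsimp only; lia), mul_zero, mul_zero,
    add_zero, add_zero]
  by_cases h_zero : a = 0 ∧ b = 0
  · rw [h_zero.1, h_zero.2, fermionicTerm_zero hs, fermionicTerm_zero hs]
  · rw [fermionicTerm_eq_zero s (by push_cast; lia), fermionicTerm_eq_zero s (by push_cast; lia)]

lemma finsum_fermionicTerm (hs₀ : s ≠ 0) (hs : ¬IsOfFinOrder s) (n : ℕ) :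
    ∑ᶠ z, fermionicTerm s n z = gollnitzGordon s n := by
  refine eq_gollnitzGordon (a := fun n => ∑ᶠ z, fermionicTerm s n z) ?_ ?_ (fun n => ?_) n
  · rw [finsum_eq_single _ (0, 0), fermionicTerm_zero hs]
    intro z hz
    exact fermionicTerm_eq_zero s fun h => hz (by ext <;> push_cast at h ⊢ <;> lia)
  · have h_supp : (fermionicTerm s 1).support ⊆ (({(0, 0), (1, 0)} : Finset (ℤ × ℤ)) : Set _) := by
      rintro ⟨a, b⟩ hz
      have h := bounds_of_fermionicTerm_ne_zero hz
      simp only [Nat.cast_one, coe_insert, coe_singleton, Set.mem_insert_iff,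
        Set.mem_singleton_iff, Prod.mk.injEq] at h ⊢
      lia
    have h_one : fermionicTerm s 1 (1, 0) = s := by
      have h_zero := qBin_zero_right (not_isOfFinOrder_sq hs) 1
      have h_self := qBin_self (not_isOfFinOrder_sq hs) 1
      norm_num at h_zero h_self
      norm_num [fermionicTerm, h_zero, h_self]
    rw [finsum_eq_sum_of_support_subset _ h_supp, sum_pair (by decide), fermionicTerm_zero hs,
      h_one]
  · have h_fin (n : ℕ) := hasFiniteSupport_fermionicTerm s n
    have h_shift (m n : ℕ) (c : ℤ × ℤ) :
        (fun z => s ^ m * fermionicTerm s n (z - c)).HasFiniteSupport :=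
      ((h_fin n).fun_comp_of_injective sub_left_injective).subset fun _ => right_ne_zero_of_mul
    rw [finsum_congr (fermionicTerm_add_two hs₀ hs n),
      finsum_add_distrib ((h_fin _).fun_add (h_shift _ _ _)) (h_shift _ _ _),
      finsum_add_distrib (h_fin _) (h_shift _ _ _), ← mul_finsum, ← mul_finsum,
      finsum_comp_sub_right, finsum_comp_sub_right]
    ring

end Fermionic

section Transfer

variable {s : RatFunc ℚ}

/-- The common summand of the two expansions of `s ^ (k ^ 2) * [2 L choose L - k]`: by
`q`-Vandermonde applied twice, and by the definition of the trinomials `T_0(n, k)`. -/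
noncomputable def transferTerm (s : RatFunc ℚ) (L : ℕ) (k n u : ℤ) : RatFunc ℚ :=
  s ^ (n ^ 2) * qPoch (s ^ 2) L * qPochInv (s ^ 2) (L - n) *
    trinomialTerm s u (u + k) (n - 2 * u - k)

lemma bounds_of_transferTerm_ne_zero {L : ℕ} {k n u : ℤ} (h : transferTerm s L k n u ≠ 0) :
    n ≤ L ∧ 0 ≤ u ∧ 0 ≤ u + k ∧ 0 ≤ n - 2 * u - k :=
  ⟨sub_nonneg.mp (nonneg_of_qPochInv_ne_zero (right_ne_zero_of_mul (left_ne_zero_of_mul h))),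
    nonneg_of_trinomialTerm_ne_zero (right_ne_zero_of_mul h)⟩

lemma hasFiniteSupport_uncurry_transferTerm (s : RatFunc ℚ) (L : ℕ) (k : ℤ) :
    (Function.uncurry (transferTerm s L k)).HasFiniteSupport := by
  refine (Set.finite_Icc ((0 : ℤ), (0 : ℤ)) (L, L)).subset fun z hz => ?_
  have h_bounds := bounds_of_transferTerm_ne_zero hz
  exact ⟨⟨by dsimp only; lia, by dsimp only; lia⟩, ⟨by dsimp only; lia, by dsimp only; lia⟩⟩

lemma finsum_transferTerm (hs : ¬IsOfFinOrder s) (L n : ℕ) (k : ℤ) :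
    ∑ᶠ u, transferTerm s L k n u = s ^ (n ^ 2) * qBin (s ^ 2) L n * qT s 0 n k := by
  have h_inv := qPoch_mul_qPochInv (not_isOfFinOrder_sq hs) n
  have h_pow : s ^ ((n : ℤ) ^ 2) = s ^ (n ^ 2) := by
    exact_mod_cast rfl
  simp only [transferTerm]
  rw [← mul_finsum, ← trinomialSum, qT_zero_eq_trinomialSum, qBin_natCast, h_pow]
  linear_combination -s ^ (n ^ 2) * qPoch (s ^ 2) L * qPochInv (s ^ 2) (L - n) *
    trinomialSum s n k * h_inv

lemma transferTerm_add (hs₀ : s ≠ 0) (hs : ¬IsOfFinOrder s) (l m : ℕ) (k u : ℤ) :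
    transferTerm s (l + m) k (l + (u + k)) u =
      s ^ (k ^ 2) * ((s ^ 2) ^ (l * (l + k)) * qBin (s ^ 2) (l + m : ℕ) l) *
        ((s ^ 2) ^ (u * (u + k)) * qBin (s ^ 2) l u * qBin (s ^ 2) m (u + k)) := by
  have h_pow : s ^ ((l + (u + k)) ^ 2) * s ^ ((l - u) ^ 2) =
      s ^ (k ^ 2) * s ^ (2 * (l * (l + k))) * s ^ (2 * (u * (u + k))) := by
    rw [← zpow_add₀ hs₀, ← zpow_add₀ hs₀, ← zpow_add₀ hs₀]
    ring_nf
  have h_l := qPoch_mul_qPochInv (not_isOfFinOrder_sq hs) l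
  have h_m := qPoch_mul_qPochInv (not_isOfFinOrder_sq hs) m
  have h_sub : ((l + m : ℕ) : ℤ) - l = m := by lia
  rw [sq_zpow, sq_zpow, qBin_natCast, qBin_natCast, qBin_natCast, transferTerm, trinomialTerm,
    show l + (u + k) - 2 * u - k = l - u by ring,
    show ((l + m : ℕ) : ℤ) - (l + (u + k)) = m - (u + k) by lia, h_sub]
  set c := qPoch (s ^ 2) (l + m) * qPochInv (s ^ 2) (m - (u + k)) * qPochInv (s ^ 2) u *
    qPochInv (s ^ 2) (u + k) * qPochInv (s ^ 2) (l - u)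
  set e := s ^ (k ^ 2) * s ^ (2 * (l * (l + k))) * s ^ (2 * (u * (u + k)))
  linear_combination c * h_pow - c * e * (qPoch (s ^ 2) m * qPochInv (s ^ 2) m * h_l + h_m)

lemma finsum_transferTerm_add (hs₀ : s ≠ 0) (hs : ¬IsOfFinOrder s) (L : ℕ) (k l : ℤ) :
    ∑ᶠ u, transferTerm s L k (l + (u + k)) u =
      s ^ (k ^ 2) * ((s ^ 2) ^ (l * (l + k)) * qBin (s ^ 2) L l * qBin (s ^ 2) L (l + k)) := by
  by_cases h : 0 ≤ l ∧ l ≤ L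
  · obtain ⟨l, rfl⟩ := Int.eq_ofNat_of_zero_le h.1
    obtain ⟨m, rfl⟩ := Nat.exists_eq_add_of_le (Int.ofNat_le.mp h.2)
    rw [finsum_congr (transferTerm_add hs₀ hs l m k), ← mul_finsum]
    push_cast
    rw [← qBin_add_add (pow_ne_zero 2 hs₀) (not_isOfFinOrder_sq hs)]
    ring
  · rw [qBin_eq_zero _ h, mul_zero, zero_mul, mul_zero]
    refine finsum_eq_zero_of_forall_eq_zero fun u => ?_
    by_contra h_ne
    have h_bounds := bounds_of_transferTerm_ne_zero h_ne
    lia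

lemma sum_qBin_mul_qT_zero (hs₀ : s ≠ 0) (hs : ¬IsOfFinOrder s) (L : ℕ) (k : ℤ) :
    ∑ n ∈ range (L + 1), s ^ (n ^ 2) * qBin (s ^ 2) L n * qT s 0 n k =
      s ^ (k ^ 2) * qBin (s ^ 2) (2 * L) (L - k) := by
  have hx₀ : s ^ 2 ≠ 0 := pow_ne_zero 2 hs₀
  have hx := not_isOfFinOrder_sq hs
  calc _ = ∑ n ∈ range (L + 1), ∑ᶠ u, transferTerm s L k n u :=
        sum_congr rfl fun n _ => (finsum_transferTerm hs L n k).symm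
    _ = ∑ᶠ n : ℤ, ∑ᶠ u, transferTerm s L k n u := by
      refine (finsum_finsum_int_eq_sum_range _ fun n u h => ?_).symm
      have h_bounds := bounds_of_transferTerm_ne_zero h
      lia
    _ = ∑ᶠ l : ℤ, ∑ᶠ u, transferTerm s L k (l + (u + k)) u :=
      (finsum_finsum_comp_add_right _ (hasFiniteSupport_uncurry_transferTerm s L k)).symm
    _ = s ^ (k ^ 2) * qBin (s ^ 2) (L + L) (L + k) := by
      rw [finsum_congr (finsum_transferTerm_add hs₀ hs L k), ← mul_finsum, qBin_add_add hx₀ hx]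
    _ = _ := by
      rw [← qBin_sub_right, ← two_mul, two_mul, add_sub_add_left_eq_sub]

end Transfer

section FermionicTransfer

variable {s : RatFunc ℚ}

/-- The common summand of the two sides of the transfer identity for the fermionic form:
`z = (a, b)` are the indices of `fermionicTerm s i` and `i` is the transfer index. -/
noncomputable def fermionicTransferTerm (s : RatFunc ℚ) (L : ℕ) (i : ℤ) (z : ℤ × ℤ) : RatFunc ℚ :=
  s ^ (i ^ 2 + z.1 ^ 2 + z.2 ^ 2) * qBin (s ^ 2) L i * qBin (s ^ 2) z.1 z.2 *
    qBin (s ^ 2) (i - z.2) z.1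

lemma bounds_of_fermionicTransferTerm_ne_zero {L : ℕ} {i : ℤ} {z : ℤ × ℤ}
    (h : fermionicTransferTerm s L i z ≠ 0) : i ≤ L ∧ 0 ≤ z.2 ∧ z.2 ≤ z.1 ∧ z.1 ≤ i - z.2 := by
  simp only [fermionicTransferTerm, mul_ne_zero_iff] at h
  obtain ⟨⟨⟨-, h_L⟩, h_b⟩, h_a⟩ := h
  exact ⟨(bounds_of_qBin_ne_zero h_L).2, (bounds_of_qBin_ne_zero h_b).1,
    (bounds_of_qBin_ne_zero h_b).2, (bounds_of_qBin_ne_zero h_a).2⟩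

lemma hasFiniteSupport_uncurry_fermionicTransferTerm (s : RatFunc ℚ) (L : ℕ) :
    (Function.uncurry (fermionicTransferTerm s L)).HasFiniteSupport := by
  refine (Set.finite_Icc ((0 : ℤ), (0 : ℤ), (0 : ℤ)) (L, L, L)).subset fun z hz => ?_
  have h_bounds := bounds_of_fermionicTransferTerm_ne_zero hz
  simp only [Set.mem_Icc, Prod.le_def]
  lia

lemma finsum_fermionicTransferTerm (hs₀ : s ≠ 0) (hs : ¬IsOfFinOrder s) (L i : ℕ) :
    ∑ᶠ z, fermionicTransferTerm s L i z =
      s ^ (i ^ 2) * qBin (s ^ 2) L i * gollnitzGordon s i := by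
  have h_pow (z : ℤ × ℤ) :
      s ^ ((i : ℤ) ^ 2 + z.1 ^ 2 + z.2 ^ 2) = s ^ (i ^ 2) * s ^ (z.1 ^ 2 + z.2 ^ 2) := by
    rw [← zpow_natCast, ← zpow_add₀ hs₀]
    push_cast
    ring_nf
  rw [← finsum_fermionicTerm hs₀ hs, mul_finsum]
  refine finsum_congr fun z => ?_
  rw [fermionicTransferTerm, fermionicTerm, h_pow]
  ring

lemma finsum_fermionicTransferTerm_add (hs₀ : s ≠ 0) (hs : ¬IsOfFinOrder s) (L n a : ℕ) :
    ∑ᶠ b, fermionicTransferTerm s L (n + b) (a, b) =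
      s ^ (n ^ 2 + a ^ 2) * qBin (s ^ 2) (L + a) (n + a) * qBin (s ^ 2) n a := by
  have h_pow (b : ℤ) : s ^ ((n + b) ^ 2 + (a : ℤ) ^ 2 + b ^ 2) =
      s ^ (n ^ 2 + a ^ 2) * s ^ (2 * (b * (b + n))) := by
    rw [← zpow_natCast, ← zpow_add₀ hs₀]
    push_cast
    ring_nf
  rw [add_comm (L : ℤ), add_comm (n : ℤ),
    qBin_add_add (pow_ne_zero 2 hs₀) (not_isOfFinOrder_sq hs), mul_finsum, finsum_mul]
  refine finsum_congr fun b => ?_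
  rw [fermionicTransferTerm, h_pow, sq_zpow, add_sub_cancel_right, add_comm b]
  ring

lemma finsum_fermionicTransferTerm_add_snd (hs₀ : s ≠ 0) (hs : ¬IsOfFinOrder s) (L n : ℕ) :
    ∑ᶠ z, fermionicTransferTerm s L (n + z.2) z = ∑ a ∈ range (n + 1),
      s ^ (n ^ 2 + a ^ 2) * qBin (s ^ 2) (L + a) (n + a) * qBin (s ^ 2) n a := by
  have h_inj : Function.Injective fun z : ℤ × ℤ => (n + z.2, z) := fun _ _ h => congrArg Prod.snd h
  have h_fin : (fun z => fermionicTransferTerm s L (n + z.2) z).HasFiniteSupport :=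
    (hasFiniteSupport_uncurry_fermionicTransferTerm s L).fun_comp_of_injective h_inj
  rw [finsum_curry _ h_fin,
    finsum_finsum_int_eq_sum_range fun a b => fermionicTransferTerm s L (n + b) (a, b)]
  · exact sum_congr rfl fun a _ => finsum_fermionicTransferTerm_add hs₀ hs L n a
  · intro a b h
    have h_bounds := bounds_of_fermionicTransferTerm_ne_zero h
    lia

lemma sum_sum_qBin_mul_qBin (hs₀ : s ≠ 0) (hs : ¬IsOfFinOrder s) (L : ℕ) :
    ∑ n ∈ range (L + 1), ∑ a ∈ range (n + 1),
        s ^ (n ^ 2 + a ^ 2) * qBin (s ^ 2) (L + a) (n + a) * qBin (s ^ 2) n a =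
      ∑ i ∈ range (L + 1), s ^ (i ^ 2) * qBin (s ^ 2) L i * gollnitzGordon s i := by
  simp only [← finsum_fermionicTransferTerm hs₀ hs, ← finsum_fermionicTransferTerm_add_snd hs₀ hs]
  rw [← finsum_finsum_int_eq_sum_range (fermionicTransferTerm s L),
    ← finsum_finsum_int_eq_sum_range fun n z => fermionicTransferTerm s L (n + z.2) z]
  · exact finsum_finsum_comp_add_right _ (hasFiniteSupport_uncurry_fermionicTransferTerm s L)
  · intro n z h
    have h_bounds := bounds_of_fermionicTransferTerm_ne_zero h
    lia
  · intro i z h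
    have h_bounds := bounds_of_fermionicTransferTerm_ne_zero h
    lia

end FermionicTransfer

section BosonicTransfer

variable {s : RatFunc ℚ}

lemma sum_Icc_bosonicWeight_mul (hs₀ : s ≠ 0) (hs : ¬IsOfFinOrder s) {L n : ℕ} (hn : n ≤ L) :
    ∑ j ∈ Icc (-(L : ℤ)) L, bosonicWeight s j * (qT s 0 n (4 * j) + qT s 0 n (4 * j + 1)) =
      gollnitzGordon s n := by
  rw [← finsum_bosonicWeight_mul hs₀ hs, finsum_eq_sum_of_support_subset]
  rw [Function.support_subset_iff']
  intro j hj
  rw [mem_coe, mem_Icc] at hj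
  rw [qT_zero_eq_zero s (lt_abs.mpr (by lia)), qT_zero_eq_zero s (lt_abs.mpr (by lia)),
    add_zero, mul_zero]

lemma sum_qBin_mul_gollnitzGordon (hs₀ : s ≠ 0) (hs : ¬IsOfFinOrder s) (L : ℕ) :
    ∑ n ∈ range (L + 1), s ^ (n ^ 2) * qBin (s ^ 2) L n * gollnitzGordon s n =
      ∑ j ∈ Icc (-(L : ℤ)) L, bosonicWeight s j *
        (s ^ ((4 * j) ^ 2) * qBin (s ^ 2) (2 * L) (L - 4 * j) +
          s ^ ((4 * j + 1) ^ 2) * qBin (s ^ 2) (2 * L) (L - (4 * j + 1))) := by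
  calc _ = ∑ n ∈ range (L + 1), ∑ j ∈ Icc (-(L : ℤ)) L, s ^ (n ^ 2) * qBin (s ^ 2) L n *
          (bosonicWeight s j * (qT s 0 n (4 * j) + qT s 0 n (4 * j + 1))) := by
        refine sum_congr rfl fun n hn => ?_
        rw [← mul_sum, sum_Icc_bosonicWeight_mul hs₀ hs (mem_range_succ_iff.mp hn)]
    _ = _ := by
        rw [sum_comm]
        refine sum_congr rfl fun j _ => ?_
        rw [← sum_qBin_mul_qT_zero hs₀ hs, ← sum_qBin_mul_qT_zero hs₀ hs, ← sum_add_distrib,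
          mul_sum]
        exact sum_congr rfl fun n _ => by ring

end BosonicTransfer

lemma sum_range_sum_range_ite_even {M : Type*} [AddCommMonoid M] {f : ℕ → ℕ → M} {L : ℕ}
    (hf : ∀ i j, Even (i + j) → f i j ≠ 0 → j ≤ i ∧ i + j ≤ 2 * L) :
    ∑ i ∈ range (2 * L + 1), ∑ j ∈ range (2 * L + 1), (if Even (i + j) then f i j else 0) =
      ∑ n ∈ range (L + 1), ∑ a ∈ range (n + 1), f (n + a) (n - a) := by
  rw [sum_sigma', sum_sigma']
  symm
  refine sum_of_injOn (fun z => ⟨z.1 + z.2, z.1 - z.2⟩) ?_ ?_ ?_ ?_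
  · rintro ⟨n, a⟩ hz ⟨n', a'⟩ hz' h
    simp only [coe_sigma, Set.mem_sigma_iff, mem_coe, mem_range, Sigma.mk.injEq, heq_eq_eq]
      at hz hz' h ⊢
    lia
  · rintro ⟨n, a⟩ hz
    simp only [coe_sigma, Set.mem_sigma_iff, mem_coe, mem_range] at hz ⊢
    lia
  · rintro ⟨i, j⟩ - h_image
    by_contra h
    obtain ⟨h_even, h_ne⟩ := ite_ne_right_iff.mp h
    obtain ⟨h_le, h_add⟩ := hf i j h_even h_ne
    obtain ⟨n, hn⟩ := h_even
    refine h_image ⟨⟨n, i - n⟩, ?_, ?_⟩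
    · simp only [coe_sigma, Set.mem_sigma_iff, mem_coe, mem_range]
      lia
    · simp only [Sigma.mk.injEq, heq_eq_eq]
      lia
  · rintro ⟨n, a⟩ hz
    simp only [mem_sigma, mem_range] at hz
    have h_even : Even (n + a + (n - a)) := ⟨n, by lia⟩
    rw [if_pos h_even]

lemma sum_sum_ite_even_qBin_mul_qBin (q : RatFunc ℚ) (L : ℕ) :
    ∑ m1 ∈ range (2 * L + 1), ∑ m2 ∈ range (2 * L + 1),
        (if Even (m1 + m2) then
          q ^ (m1 ^ 2 + m2 ^ 2) * qBin (q ^ 4) (L + ((m1 : ℤ) - m2) / 2) m1 *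
            qBin (q ^ 4) (((m1 : ℤ) + m2) / 2) m2
        else 0) =
      ∑ n ∈ range (L + 1), ∑ a ∈ range (n + 1),
        q ^ (2 * (n ^ 2 + a ^ 2)) * qBin (q ^ 4) (L + a) (n + a) * qBin (q ^ 4) n a := by
  rw [sum_range_sum_range_ite_even]
  · refine sum_congr rfl fun n _ => sum_congr rfl fun a ha => ?_
    obtain ⟨b, rfl⟩ := Nat.exists_eq_add_of_le (mem_range_succ_iff.mp ha)
    rw [← qBin_sub_right _ _ (a : ℤ), Nat.add_sub_cancel_left]
    congr! 3 <;> lia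
  · rintro i j ⟨n, hn⟩ h
    have h_left := bounds_of_qBin_ne_zero (right_ne_zero_of_mul (left_ne_zero_of_mul h))
    have h_right := bounds_of_qBin_ne_zero (right_ne_zero_of_mul h)
    lia

theorem stmt13_general {q : RatFunc ℚ} (hq₀ : q ≠ 0) (hq : ¬IsOfFinOrder q) (L : ℕ) :
    ∑ m1 ∈ Finset.range (2 * L + 1), ∑ m2 ∈ Finset.range (2 * L + 1),
        (if Even (m1 + m2) then
          q ^ (m1 ^ 2 + m2 ^ 2) *
            qBin (q ^ 4) ((L : ℤ) + ((m1 : ℤ) - m2) / 2) (m1 : ℤ) *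
            qBin (q ^ 4) (((m1 : ℤ) + m2) / 2) (m2 : ℤ)
        else 0) =
      ∑ j ∈ Finset.Icc (-(L : ℤ)) (L : ℤ),
        (-1 : RatFunc ℚ) ^ j *
          (q ^ (2 * j * (20 * j + 1)) * qBin (q ^ 4) (2 * (L : ℤ)) ((L : ℤ) - 4 * j) +
            q ^ (2 * (4 * j + 1) * (5 * j + 1)) *
              qBin (q ^ 4) (2 * (L : ℤ)) ((L : ℤ) - 4 * j - 1)) := by
  have hs₀ : q ^ 2 ≠ 0 := pow_ne_zero 2 hq₀
  have hs := not_isOfFinOrder_sq hq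
  have h_base : q ^ 4 = (q ^ 2) ^ 2 := pow_mul q 2 2
  rw [sum_sum_ite_even_qBin_mul_qBin]
  simp only [pow_mul q 2, h_base]
  rw [sum_sum_qBin_mul_qBin hs₀ hs, sum_qBin_mul_gollnitzGordon hs₀ hs]
  refine sum_congr rfl fun j _ => ?_
  have h_even : q ^ (2 * j * (20 * j + 1)) =
      (q ^ 2) ^ (j * (4 * j + 1)) * (q ^ 2) ^ ((4 * j) ^ 2) := by
    rw [← zpow_add₀ hs₀, sq_zpow]
    ring_nf
  have h_odd : q ^ (2 * (4 * j + 1) * (5 * j + 1)) =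
      (q ^ 2) ^ (j * (4 * j + 1)) * (q ^ 2) ^ ((4 * j + 1) ^ 2) := by
    rw [← zpow_add₀ hs₀, sq_zpow]
    ring_nf
  rw [bosonicWeight, h_even, h_odd, sub_sub]
  ring

lemma not_isOfFinOrder_qq : ¬IsOfFinOrder qq := by
  rw [isOfFinOrder_iff_pow_eq_one]
  rintro ⟨n, hn, h⟩
  refine RatFunc.transcendental_X (K := ℚ)
    ⟨Polynomial.X ^ n - 1, Polynomial.X_pow_sub_C_ne_zero hn 1, ?_⟩
  simpa [qq, sub_eq_zero] using h

theorem stmt13 (L : ℕ) :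
    ∑ m1 ∈ Finset.range (2 * L + 1), ∑ m2 ∈ Finset.range (2 * L + 1),
        (if Even (m1 + m2) then
          qq ^ (m1 ^ 2 + m2 ^ 2) *
            qBin (qq ^ 4) ((L : ℤ) + ((m1 : ℤ) - m2) / 2) (m1 : ℤ) *
            qBin (qq ^ 4) (((m1 : ℤ) + m2) / 2) (m2 : ℤ)
        else 0) =
      ∑ j ∈ Finset.Icc (-(L : ℤ)) (L : ℤ),
        (-1 : RatFunc ℚ) ^ j *
          (qq ^ (2 * j * (20 * j + 1)) * qBin (qq ^ 4) (2 * (L : ℤ)) ((L : ℤ) - 4 * j) +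
            qq ^ (2 * (4 * j + 1) * (5 * j + 1)) *
              qBin (qq ^ 4) (2 * (L : ℤ)) ((L : ℤ) - 4 * j - 1)) := by
  exact stmt13_general RatFunc.X_ne_zero not_isOfFinOrder_qq L
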